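/- For every t > 0 and every K > 1, writing r = √(t/(1+t)) and r' = 1/√(1+t), one has t + t·((2/π)·𝒦'(r))²·(exp(2(K−1)·μ(r')) − 1) < η_K(t) < t + (1/16)·exp(2μ(r'))·(exp(2(K−1)·μ(r')) − 1). -/

import Mathlib

open Set Filter

/-- Complete elliptic integral of the first kind. -/
noncomputable def ellK (r : ℝ) : ℝ :=
  ∫ θ in (0:ℝ)..(Real.pi / 2), (1 - r ^ 2 * Real.sin θ ^ 2) ^ (-(1/2) : ℝ)

/-- The Grötzsch modulus μ(r) = (π/2)·𝒦'(r)/𝒦(r). -/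
noncomputable def mu (r : ℝ) : ℝ :=
  Real.pi / 2 * ellK (Real.sqrt (1 - r ^ 2)) / ellK r

/-!
Write `m = r²` and regard `μ` as a function of `m`. Legendre's relation gives
`dμ/dm = -π² / (8 m (1 - m) 𝒦²)`, so the derivative of `1 / m` with respect to `exp (2 μ)` is
`φ(m) = (1 - m) / m * (2 𝒦 / π)² * exp (-2 μ)`. The logarithmic derivative of `φ` is negative since
`π² / 4 < 𝒦 ((2 - m) 𝒦 - ℰ)`, a Cauchy-Schwarz inequality, so `φ` is strictly decreasing. Moreover
`φ < 1 / 16`, because `𝒦(k) ≥ log 2 + artanh k` bounds the limit of `φ` at `0`. If `m₀` belongs to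
`r'` and `m < m₀` to the solution `u` of `μ(u) = K μ(r')`, Cauchy's mean value theorem gives
`η_K(t) - t = 1 / m - 1 / m₀ = φ(x) (exp (2 K μ(r')) - exp (2 μ(r')))` with `m < x < m₀`, and
`φ(m₀) < φ(x) < 1 / 16` yields the two bounds.
-/

section EllipticIntegrals

open Real Topology MeasureTheory

theorem hasDerivAt_intervalIntegral_of_continuousOn {𝕜 E : Type*} [RCLike 𝕜]
    [NormedAddCommGroup E] [NormedSpace ℝ E] [NormedSpace 𝕜 E] {F F' : 𝕜 → ℝ → E} {s : Set 𝕜}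
    {a b : ℝ} {x₀ : 𝕜} (hs : s ∈ 𝓝 x₀) (hF : ∀ x ∈ s, ContinuousOn (F x) (uIcc a b))
    (hF' : ContinuousOn (fun p : 𝕜 × ℝ => F' p.1 p.2) (s ×ˢ uIcc a b))
    (hderiv : ∀ x ∈ s, ∀ θ ∈ uIcc a b, HasDerivAt (fun y => F y θ) (F' x θ) x) :
    HasDerivAt (fun x => ∫ θ in a..b, F x θ) (∫ θ in a..b, F' x₀ θ) x₀ := by
  obtain ⟨U, hU, hUs, hUc⟩ := local_compact_nhds hs
  obtain ⟨C, hC⟩ := (hUc.prod isCompact_uIcc).exists_bound_of_continuousOn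
    (hF'.mono (prod_mono_left hUs))
  have hF'₀ : ContinuousOn (F' x₀) (uIcc a b) :=
    hF'.comp (f := fun θ => (x₀, θ)) (by fun_prop) fun θ hθ => ⟨mem_of_mem_nhds hs, hθ⟩
  have aestronglyMeasurable {f : ℝ → E} (hf : ContinuousOn f (uIcc a b)) :
      AEStronglyMeasurable f (volume.restrict (uIoc a b)) :=
    (hf.mono uIoc_subset_uIcc).aestronglyMeasurable measurableSet_uIoc
  refine (intervalIntegral.hasDerivAt_integral_of_dominated_loc_of_deriv_le (bound := fun _ => C)
    hU ?_ (hF x₀ (mem_of_mem_nhds hs)).intervalIntegrable (aestronglyMeasurable hF'₀) ?_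
    intervalIntegrable_const ?_).2
  · filter_upwards [hs] with x hx using aestronglyMeasurable (hF x hx)
  · exact .of_forall fun θ hθ x hx => hC (x, θ) ⟨hx, uIoc_subset_uIcc hθ⟩
  · exact .of_forall fun θ hθ x hx => hderiv x (hUs hx) θ (uIoc_subset_uIcc hθ)

theorem sq_intervalIntegral_mul_le {f w : ℝ → ℝ} {a b : ℝ} (hab : a ≤ b)
    (hf : ContinuousOn f (Icc a b)) (hw : ContinuousOn w (Icc a b))
    (hw_nonneg : ∀ x ∈ Icc a b, 0 ≤ w x) :
    (∫ x in a..b, f x * w x) ^ 2 ≤ (∫ x in a..b, w x) * ∫ x in a..b, f x ^ 2 * w x := by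
  have quadratic_nonneg (l : ℝ) : 0 ≤ (∫ x in a..b, w x) * (l * l)
      + -2 * (∫ x in a..b, f x * w x) * l + ∫ x in a..b, f x ^ 2 * w x := by
    have h : 0 ≤ ∫ x in a..b, (f x - l) ^ 2 * w x :=
      intervalIntegral.integral_nonneg hab fun x hx => mul_nonneg (sq_nonneg _) (hw_nonneg x hx)
    have expand : ∀ x, (f x - l) ^ 2 * w x
        = l * l * w x + -2 * l * (f x * w x) + f x ^ 2 * w x := fun x => by ring
    have int {g : ℝ → ℝ} (hg : ContinuousOn g (Icc a b)) : IntervalIntegrable g volume a b :=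
      hg.intervalIntegrable_of_Icc hab
    simp only [expand] at h
    rw [intervalIntegral.integral_add (int (by fun_prop)) (int (by fun_prop)),
      intervalIntegral.integral_add (int (by fun_prop)) (int (by fun_prop)),
      intervalIntegral.integral_const_mul, intervalIntegral.integral_const_mul] at h
    linarith
  have := discrim_le_zero quadratic_nonneg
  rw [discrim] at this
  linarith

theorem two_le_div_add_div {x y : ℝ} (hx : 0 < x) (hy : 0 < y) : 2 ≤ x / y + y / x := by
  rw [div_add_div _ _ hy.ne' hx.ne', le_div_iff₀ (mul_pos hy hx)]
  linarith [two_mul_le_add_sq x y]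

theorem two_lt_div_add_div {x y : ℝ} (hx : 0 < x) (hy : 0 < y) (hxy : x ≠ y) :
    2 < x / y + y / x := by
  rw [div_add_div _ _ hy.ne' hx.ne', lt_div_iff₀ (mul_pos hy hx)]
  linarith [sq_pos_of_ne_zero (sub_ne_zero.2 hxy)]

-- Reflecting the variable turns the integrand into its reciprocal, and `x / y + y / x ≥ 2`.
theorem sub_lt_integral_div_reflect {f : ℝ → ℝ} {a b : ℝ} (hab : a < b)
    (hf : ContinuousOn f (Icc a b)) (hf_pos : ∀ x ∈ Icc a b, 0 < f x) (hne : f a ≠ f b) :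
    b - a < ∫ x in a..b, f (a + b - x) / f x := by
  have reflect_mem {x : ℝ} (hx : x ∈ Icc a b) : a + b - x ∈ Icc a b :=
    ⟨by linarith [hx.2], by linarith [hx.1]⟩
  have hreflect : ContinuousOn (fun x => f (a + b - x)) (Icc a b) :=
    hf.comp (by fun_prop) fun _ => reflect_mem
  have hdiv : ContinuousOn (fun x => f (a + b - x) / f x) (Icc a b) :=
    hreflect.div hf fun x hx => (hf_pos x hx).ne'
  have hdiv' : ContinuousOn (fun x => f x / f (a + b - x)) (Icc a b) :=
    hf.div hreflect fun x hx => (hf_pos _ (reflect_mem hx)).ne'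
  have symm : ∫ x in a..b, f x / f (a + b - x) = ∫ x in a..b, f (a + b - x) / f x := by
    simpa using (intervalIntegral.integral_comp_sub_left
      (fun x => f x / f (a + b - x)) (a + b) (a := a) (b := b)).symm
  have lt : ∫ _ in a..b, (2 : ℝ) < ∫ x in a..b, (f (a + b - x) / f x + f x / f (a + b - x)) :=
    intervalIntegral.integral_lt_integral_of_continuousOn_of_le_of_exists_lt hab
      continuousOn_const (hdiv.add hdiv')
      (fun x hx => have hx' := Ioc_subset_Icc_self hx
        two_le_div_add_div (hf_pos _ (reflect_mem hx')) (hf_pos x hx'))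
      ⟨a, left_mem_Icc.2 hab.le, by
        simpa using two_lt_div_add_div (hf_pos b (right_mem_Icc.2 hab.le))
          (hf_pos a (left_mem_Icc.2 hab.le)) hne.symm⟩
  rw [intervalIntegral.integral_add (hdiv.intervalIntegrable_of_Icc hab.le)
    (hdiv'.intervalIntegrable_of_Icc hab.le), symm, intervalIntegral.integral_const,
    smul_eq_mul] at lt
  linarith

/-! ### Complete elliptic integrals -/

/-- The amplitude radical `Δ(θ) = √(1 - m sin² θ)` of the elliptic integrals. As for `ellipticK` and
`ellipticE` below, the argument is the parameter `m = r²`, not the modulus `r`. -/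
noncomputable def ellipticDelta (m θ : ℝ) : ℝ := √(1 - m * sin θ ^ 2)

/-- The complete elliptic integral of the first kind, `𝒦(r)` for `m = r²`. The complementary
integral `𝒦'(r)` is `ellipticK (1 - m)`. -/
noncomputable def ellipticK (m : ℝ) : ℝ := ∫ θ in (0 : ℝ)..(π / 2), (ellipticDelta m θ)⁻¹

/-- The complete elliptic integral of the second kind, `ℰ(r)` for `m = r²`; it enters through the
derivative of `ellipticK`. -/
noncomputable def ellipticE (m : ℝ) : ℝ := ∫ θ in (0 : ℝ)..(π / 2), ellipticDelta m θ

/-- The Grötzsch modulus `μ(r)` as a function of `m = r²`. -/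
noncomputable def grotzschMod (m : ℝ) : ℝ := π / 2 * ellipticK (1 - m) / ellipticK m

/-- The bilinear expression in the elliptic integrals at `m` and `1 - m` that Legendre's relation
evaluates. -/
noncomputable def legendreForm (m : ℝ) : ℝ :=
  ellipticE m * ellipticK (1 - m) + ellipticE (1 - m) * ellipticK m
    - ellipticK m * ellipticK (1 - m)

/-- The derivative of `1 / m` with respect to `exp (2 μ)`, for `m = r²` and `μ = μ(r)`. -/
noncomputable def growthRatio (m : ℝ) : ℝ :=
  (1 - m) / m * (2 / π * ellipticK m) ^ 2 * exp (-(2 * grotzschMod m))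

variable {m : ℝ}

@[fun_prop]
theorem continuous_ellipticDelta : Continuous fun p : ℝ × ℝ => ellipticDelta p.1 p.2 := by
  unfold ellipticDelta
  fun_prop

theorem one_sub_mul_sin_sq_pos (hm : m < 1) (θ : ℝ) : 0 < 1 - m * sin θ ^ 2 := by
  rcases le_or_gt m 0 with hm₀ | hm₀ <;> nlinarith [sin_sq_le_one θ, sq_nonneg (sin θ)]

theorem ellipticDelta_pos (hm : m < 1) (θ : ℝ) : 0 < ellipticDelta m θ :=
  sqrt_pos.2 (one_sub_mul_sin_sq_pos hm θ)

theorem sq_ellipticDelta (hm : m < 1) (θ : ℝ) :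
    ellipticDelta m θ ^ 2 = 1 - m * sin θ ^ 2 :=
  sq_sqrt (one_sub_mul_sin_sq_pos hm θ).le

theorem ellipticDelta_le_one (hm : 0 ≤ m) (θ : ℝ) : ellipticDelta m θ ≤ 1 :=
  sqrt_le_one.2 (by linarith [mul_nonneg hm (sq_nonneg (sin θ))])

theorem sqrt_one_sub_le_ellipticDelta (hm : 0 ≤ m) (θ : ℝ) :
    √(1 - m) ≤ ellipticDelta m θ :=
  sqrt_le_sqrt (by nlinarith [sin_sq_le_one θ])

theorem intervalIntegrable_ellipticDelta (m a b : ℝ) :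
    IntervalIntegrable (ellipticDelta m) volume a b :=
  Continuous.intervalIntegrable (by fun_prop) a b

theorem continuous_inv_ellipticDelta (hm : m < 1) :
    Continuous fun θ => (ellipticDelta m θ)⁻¹ :=
  Continuous.inv₀ (by fun_prop) fun θ => (ellipticDelta_pos hm θ).ne'

theorem intervalIntegrable_inv_ellipticDelta (hm : m < 1) (a b : ℝ) :
    IntervalIntegrable (fun θ => (ellipticDelta m θ)⁻¹) volume a b :=
  (continuous_inv_ellipticDelta hm).intervalIntegrable a b

theorem intervalIntegrable_inv_ellipticDelta_pow (hm : m < 1) (n : ℕ) (a b : ℝ) :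
    IntervalIntegrable (fun θ => (ellipticDelta m θ)⁻¹ ^ n) volume a b :=
  ((continuous_inv_ellipticDelta hm).pow n).intervalIntegrable a b

theorem hasDerivAt_ellipticDelta_parameter (hm : m < 1) (θ : ℝ) :
    HasDerivAt (fun m => ellipticDelta m θ) (-(sin θ ^ 2) / (2 * ellipticDelta m θ)) m := by
  have h : HasDerivAt (fun m : ℝ => 1 - m * sin θ ^ 2) (-(sin θ ^ 2)) m := by
    simpa using ((hasDerivAt_id m).mul_const (sin θ ^ 2)).const_sub 1
  exact h.sqrt (one_sub_mul_sin_sq_pos hm θ).ne'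

theorem hasDerivAt_ellipticDelta (hm : m < 1) (θ : ℝ) :
    HasDerivAt (ellipticDelta m) (-(m * sin θ * cos θ) / ellipticDelta m θ) θ := by
  have h : HasDerivAt (fun θ => 1 - m * sin θ ^ 2) (-(m * (2 * sin θ * cos θ))) θ := by
    simpa using (((hasDerivAt_sin θ).pow 2).const_mul m).const_sub 1
  refine (h.sqrt (one_sub_mul_sin_sq_pos hm θ).ne').congr_deriv ?_
  have := ellipticDelta_pos hm θ
  change _ / (2 * ellipticDelta m θ) = _
  field_simp

theorem ellipticK_pos (hm : m < 1) : 0 < ellipticK m :=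
  intervalIntegral.intervalIntegral_pos_of_pos (intervalIntegrable_inv_ellipticDelta hm _ _)
    (fun θ => inv_pos.2 (ellipticDelta_pos hm θ)) (by positivity)

theorem ellipticK_zero : ellipticK 0 = π / 2 := by
  simp [ellipticK, ellipticDelta]

theorem ellipticE_one : ellipticE 1 = 1 := by
  have : ∀ θ ∈ uIcc 0 (π / 2), ellipticDelta 1 θ = cos θ := fun θ hθ => by
    rw [uIcc_of_le (by positivity)] at hθ
    rw [ellipticDelta, one_mul, ← cos_sq',
      sqrt_sq (cos_nonneg_of_mem_Icc ⟨by linarith [hθ.1, pi_pos], hθ.2⟩)]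
  rw [ellipticE, intervalIntegral.integral_congr this]
  simp

theorem continuous_ellipticE : Continuous ellipticE :=
  intervalIntegral.continuous_parametric_intervalIntegral_of_continuous'
    continuous_ellipticDelta _ _

theorem sqrt_one_sub_mul_ellipticK_le (hm₀ : 0 ≤ m) (hm₁ : m < 1) :
    √(1 - m) * ellipticK m ≤ π / 2 := by
  have : ∫ θ in (0 : ℝ)..(π / 2), √(1 - m) * (ellipticDelta m θ)⁻¹
      ≤ ∫ _ in (0 : ℝ)..(π / 2), (1 : ℝ) :=
    intervalIntegral.integral_mono (by positivity)
      ((intervalIntegrable_inv_ellipticDelta hm₁ _ _).const_mul _) intervalIntegrable_const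
      fun θ => mul_inv_le_one_of_le₀ (sqrt_one_sub_le_ellipticDelta hm₀ θ)
        (ellipticDelta_pos hm₁ θ).le
  simpa [ellipticK] using this

theorem one_sub_mul_sq_ellipticK_le_one (hm₀ : 0 ≤ m) (hm₁ : m < 1) :
    (1 - m) * (2 / π * ellipticK m) ^ 2 ≤ 1 := by
  have hK := ellipticK_pos hm₁
  have hle : √(1 - m) * (2 / π * ellipticK m) ≤ 1 :=
    calc √(1 - m) * (2 / π * ellipticK m) = 2 / π * (√(1 - m) * ellipticK m) := by ring
      _ ≤ 2 / π * (π / 2) := by gcongr; exact sqrt_one_sub_mul_ellipticK_le hm₀ hm₁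
      _ = 1 := by field_simp
  rw [← sq_sqrt (sub_nonneg.2 hm₁.le), ← mul_pow]
  exact pow_le_one₀ (by positivity) hle

theorem ellipticE_le_ellipticK (hm₀ : 0 ≤ m) (hm₁ : m < 1) :
    ellipticE m ≤ ellipticK m :=
  intervalIntegral.integral_mono (by positivity) (intervalIntegrable_ellipticDelta _ _ _)
    (intervalIntegrable_inv_ellipticDelta hm₁ _ _) fun θ =>
      (ellipticDelta_le_one hm₀ θ).trans
        ((one_le_inv₀ (ellipticDelta_pos hm₁ θ)).2 (ellipticDelta_le_one hm₀ θ))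

theorem one_sub_mul_ellipticK_le_ellipticE (hm₀ : 0 ≤ m) (hm₁ : m < 1) :
    (1 - m) * ellipticK m ≤ ellipticE m := by
  rw [ellipticK, ← intervalIntegral.integral_const_mul]
  refine intervalIntegral.integral_mono (by positivity)
    ((intervalIntegrable_inv_ellipticDelta hm₁ _ _).const_mul _)
    (intervalIntegrable_ellipticDelta _ _ _) fun θ => ?_
  change (1 - m) * (ellipticDelta m θ)⁻¹ ≤ ellipticDelta m θ
  rw [mul_inv_le_iff₀ (ellipticDelta_pos hm₁ θ), ← sq, sq_ellipticDelta hm₁]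
  nlinarith [sin_sq_le_one θ]

theorem integral_inv_ellipticDelta_pow_three (hm : m < 1) :
    ∫ θ in (0 : ℝ)..(π / 2), (ellipticDelta m θ)⁻¹ ^ 3 = ellipticE m / (1 - m) := by
  have hasDerivAt (θ : ℝ) : HasDerivAt (fun θ => m * (sin θ * cos θ) / ellipticDelta m θ)
      (ellipticDelta m θ - (1 - m) * (ellipticDelta m θ)⁻¹ ^ 3) θ := by
    have hΔ := ellipticDelta_pos hm θ
    refine ((((hasDerivAt_sin θ).mul (hasDerivAt_cos θ)).const_mul m).div
      (hasDerivAt_ellipticDelta hm θ) hΔ.ne').congr_deriv ?_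
    have hΔ_sq := sq_ellipticDelta hm θ
    have hΔ_four : ellipticDelta m θ ^ 4 = (1 - m * sin θ ^ 2) ^ 2 := by rw [← hΔ_sq]; ring
    simp only [Pi.mul_apply]
    field_simp
    rw [hΔ_four, hΔ_sq, cos_sq']
    ring
  have int := intervalIntegrable_ellipticDelta m 0 (π / 2)
  have int3 := intervalIntegrable_inv_ellipticDelta_pow hm 3 0 (π / 2)
  have := intervalIntegral.integral_eq_sub_of_hasDerivAt (fun θ _ => hasDerivAt θ)
    (int.sub (int3.const_mul (1 - m)))
  rw [intervalIntegral.integral_sub int (int3.const_mul _),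
    intervalIntegral.integral_const_mul] at this
  simp only [sin_pi_div_two, cos_pi_div_two, sin_zero, mul_zero, zero_mul, zero_div,
    sub_zero] at this
  rw [eq_div_iff (by linarith), ellipticE]
  linarith

theorem hasDerivAt_ellipticE (hm₀ : m ≠ 0) (hm₁ : m < 1) :
    HasDerivAt ellipticE ((ellipticE m - ellipticK m) / (2 * m)) m := by
  refine (hasDerivAt_intervalIntegral_of_continuousOn
    (F' := fun m θ => -(sin θ ^ 2) / (2 * ellipticDelta m θ)) (Iio_mem_nhds hm₁)
    (fun x _ => Continuous.continuousOn (by fun_prop)) (.div (by fun_prop) (by fun_prop)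
      fun p hp => (mul_pos two_pos (ellipticDelta_pos hp.1 p.2)).ne')
    fun x hx θ _ => hasDerivAt_ellipticDelta_parameter hx θ).congr_deriv ?_
  have integrand_eq (θ : ℝ) : -(sin θ ^ 2) / (2 * ellipticDelta m θ)
      = (ellipticDelta m θ - (ellipticDelta m θ)⁻¹) / (2 * m) := by
    have hΔ := ellipticDelta_pos hm₁ θ
    field_simp
    rw [sq_ellipticDelta hm₁]
    ring
  simp only [integrand_eq]
  rw [intervalIntegral.integral_div, intervalIntegral.integral_sub
    (intervalIntegrable_ellipticDelta _ _ _) (intervalIntegrable_inv_ellipticDelta hm₁ _ _)]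
  rfl

theorem hasDerivAt_ellipticK_integral (hm : m < 1) :
    HasDerivAt ellipticK (∫ θ in (0 : ℝ)..(π / 2), sin θ ^ 2 / (2 * ellipticDelta m θ ^ 3)) m := by
  refine hasDerivAt_intervalIntegral_of_continuousOn
    (F' := fun m θ => sin θ ^ 2 / (2 * ellipticDelta m θ ^ 3)) (Iio_mem_nhds hm)
    (fun x hx => (continuous_inv_ellipticDelta hx).continuousOn) (.div (by fun_prop) (by fun_prop)
      fun p hp => (mul_pos two_pos (pow_pos (ellipticDelta_pos hp.1 p.2) 3)).ne')
    fun x hx θ _ => ?_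
  have hΔ := ellipticDelta_pos hx θ
  refine ((hasDerivAt_ellipticDelta_parameter hx θ).inv hΔ.ne').congr_deriv ?_
  field_simp

theorem continuousAt_ellipticK (hm : m < 1) : ContinuousAt ellipticK m :=
  (hasDerivAt_ellipticK_integral hm).continuousAt

theorem hasDerivAt_ellipticK (hm₀ : m ≠ 0) (hm₁ : m < 1) :
    HasDerivAt ellipticK ((ellipticE m - (1 - m) * ellipticK m) / (2 * m * (1 - m))) m := by
  refine (hasDerivAt_ellipticK_integral hm₁).congr_deriv ?_
  have integrand_eq (θ : ℝ) : sin θ ^ 2 / (2 * ellipticDelta m θ ^ 3)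
      = ((ellipticDelta m θ)⁻¹ ^ 3 - (ellipticDelta m θ)⁻¹) / (2 * m) := by
    have hΔ := ellipticDelta_pos hm₁ θ
    field_simp
    rw [sq_ellipticDelta hm₁]
    ring
  simp only [integrand_eq]
  rw [intervalIntegral.integral_div, intervalIntegral.integral_sub
    (intervalIntegrable_inv_ellipticDelta_pow hm₁ 3 _ _)
    (intervalIntegrable_inv_ellipticDelta hm₁ _ _), integral_inv_ellipticDelta_pow_three hm₁]
  change (_ - ellipticK m) / _ = _
  have : 1 - m ≠ 0 := by linarith
  field_simp

/-! ### Legendre's relation -/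

theorem hasDerivAt_legendreForm (hm : m ∈ Ioo 0 1) : HasDerivAt legendreForm 0 m := by
  have hm₀ := hm.1.ne'
  have hm₁ : 1 - m ≠ 0 := by linarith [hm.2]
  have hK := hasDerivAt_ellipticK hm₀ hm.2
  have hE := hasDerivAt_ellipticE hm₀ hm.2
  have hK' := (hasDerivAt_ellipticK hm₁ (sub_lt_self 1 hm.1)).comp_const_sub 1 m
  have hE' := (hasDerivAt_ellipticE hm₁ (sub_lt_self 1 hm.1)).comp_const_sub 1 m
  refine (((hE.mul hK').add (hE'.mul hK)).sub (hK.mul hK')).congr_deriv ?_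
  rw [sub_sub_cancel]
  field_simp
  ring

theorem tendsto_ellipticK_nhdsGT_zero : Tendsto ellipticK (𝓝[>] 0) (𝓝 (π / 2)) :=
  ellipticK_zero ▸ (continuousAt_ellipticK one_pos).tendsto.mono_left nhdsWithin_le_nhds

-- `K - E = O(m)`, which beats `K(1 - m) = O(1 / √m)`.
theorem tendsto_ellipticK_sub_ellipticE_mul :
    Tendsto (fun m => (ellipticK m - ellipticE m) * ellipticK (1 - m)) (𝓝[>] 0) (𝓝 0) := by
  have hupper : Tendsto (fun m => √m * ellipticK m * (π / 2)) (𝓝[>] 0) (𝓝 0) := by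
    have hsqrt : Tendsto (fun m : ℝ => √m) (𝓝[>] 0) (𝓝 0) := by
      simpa using (continuous_sqrt.tendsto 0).mono_left nhdsWithin_le_nhds
    simpa using (hsqrt.mul tendsto_ellipticK_nhdsGT_zero).mul_const (π / 2)
  refine tendsto_of_tendsto_of_tendsto_of_le_of_le' tendsto_const_nhds hupper ?_ ?_ <;>
    filter_upwards [Ioo_mem_nhdsGT one_pos] with m ⟨hm₀, hm₁⟩
  · exact mul_nonneg (sub_nonneg.2 (ellipticE_le_ellipticK hm₀.le hm₁))
      (ellipticK_pos (sub_lt_self 1 hm₀)).le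
  · have hK := ellipticK_pos hm₁
    have hK' := ellipticK_pos (sub_lt_self 1 hm₀)
    have hKE : ellipticK m - ellipticE m ≤ m * ellipticK m := by
      linarith [one_sub_mul_ellipticK_le_ellipticE hm₀.le hm₁]
    have hK'_le : √m * ellipticK (1 - m) ≤ π / 2 := by
      simpa using sqrt_one_sub_mul_ellipticK_le (sub_nonneg.2 hm₁.le) (sub_lt_self 1 hm₀)
    calc (ellipticK m - ellipticE m) * ellipticK (1 - m)
      _ ≤ m * ellipticK m * ellipticK (1 - m) := by gcongr
      _ = √m * ellipticK m * (√m * ellipticK (1 - m)) := by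
        nth_rw 1 [← mul_self_sqrt hm₀.le]
        ring
      _ ≤ √m * ellipticK m * (π / 2) := by gcongr

theorem tendsto_legendreForm_nhdsGT_zero : Tendsto legendreForm (𝓝[>] 0) (𝓝 (π / 2)) := by
  have hE' : Tendsto (fun m => ellipticE (1 - m)) (𝓝[>] 0) (𝓝 1) := by
    have : Continuous fun m => ellipticE (1 - m) :=
      continuous_ellipticE.comp (continuous_sub_left 1)
    simpa [ellipticE_one] using (this.tendsto 0).mono_left nhdsWithin_le_nhds
  have := (hE'.mul tendsto_ellipticK_nhdsGT_zero).sub tendsto_ellipticK_sub_ellipticE_mul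
  rw [one_mul, sub_zero] at this
  exact this.congr fun m => by rw [legendreForm]; ring

theorem legendreForm_eq (hm : m ∈ Ioo 0 1) : legendreForm m = π / 2 := by
  have hconst : ∀ x ∈ Ioo (0 : ℝ) 1, legendreForm x = legendreForm m := fun x hx =>
    isOpen_Ioo.is_const_of_deriv_eq_zero isPreconnected_Ioo
      (fun y hy => (hasDerivAt_legendreForm hy).differentiableAt.differentiableWithinAt)
      (fun y hy => (hasDerivAt_legendreForm hy).deriv) hx hm
  refine tendsto_nhds_unique (tendsto_const_nhds.congr' ?_) tendsto_legendreForm_nhdsGT_zero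
  filter_upwards [Ioo_mem_nhdsGT one_pos] with x hx using (hconst x hx).symm

/-! ### Monotonicity of the growth ratio -/

theorem hasDerivAt_grotzschMod (hm : m ∈ Ioo 0 1) :
    HasDerivAt grotzschMod (-(π ^ 2 / (8 * m * (1 - m) * ellipticK m ^ 2))) m := by
  have hm₀ := hm.1.ne'
  have hm₁ : 1 - m ≠ 0 := by linarith [hm.2]
  have hK := ellipticK_pos hm.2
  refine ((((hasDerivAt_ellipticK hm₁ (sub_lt_self 1 hm.1)).comp_const_sub 1 m).const_mul
    (π / 2)).div (hasDerivAt_ellipticK hm₀ hm.2) hK.ne').congr_deriv ?_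
  have hlegendre := legendreForm_eq hm
  rw [legendreForm] at hlegendre
  rw [sub_sub_cancel]
  field_simp
  linear_combination -8 * hlegendre

-- Cauchy-Schwarz with the weight `1 / Δ(θ)` applied to `Δ(π / 2 - θ)`, whose square is
-- `2 - m - Δ(θ)²`.
theorem pi_sq_div_four_lt (hm₀ : m ≠ 0) (hm₁ : m < 1) :
    π ^ 2 / 4 < ellipticK m * ((2 - m) * ellipticK m - ellipticE m) := by
  have hΔ := ellipticDelta_pos hm₁
  have hsum (θ : ℝ) : ellipticDelta m (π / 2 - θ) ^ 2 = 2 - m - ellipticDelta m θ ^ 2 := by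
    rw [sq_ellipticDelta hm₁, sq_ellipticDelta hm₁, sin_pi_div_two_sub, cos_sq']
    ring
  have hsecond : ∫ θ in (0 : ℝ)..(π / 2), ellipticDelta m (π / 2 - θ) ^ 2 * (ellipticDelta m θ)⁻¹
      = (2 - m) * ellipticK m - ellipticE m := by
    rw [ellipticK, ellipticE, ← intervalIntegral.integral_const_mul,
      ← intervalIntegral.integral_sub ((intervalIntegrable_inv_ellipticDelta hm₁ _ _).const_mul _)
        (intervalIntegrable_ellipticDelta _ _ _)]
    refine intervalIntegral.integral_congr fun θ _ => ?_
    have := hΔ θ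
    simp only [hsum]
    field_simp
  have hne : ellipticDelta m 0 ≠ ellipticDelta m (π / 2) := fun h => hm₀ <| by
    have hsq := congrArg (· ^ 2) h
    simp only [sq_ellipticDelta hm₁, sin_zero, sin_pi_div_two] at hsq
    linarith
  have hfirst : π / 2 < ∫ θ in (0 : ℝ)..(π / 2),
      ellipticDelta m (π / 2 - θ) * (ellipticDelta m θ)⁻¹ := by
    simpa [div_eq_mul_inv] using sub_lt_integral_div_reflect (f := ellipticDelta m) (a := 0)
      (b := π / 2) (by positivity) (Continuous.continuousOn (by fun_prop)) (fun θ _ => hΔ θ) hne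
  calc π ^ 2 / 4 = (π / 2) ^ 2 := by ring
    _ < (∫ θ in (0 : ℝ)..(π / 2), ellipticDelta m (π / 2 - θ) * (ellipticDelta m θ)⁻¹) ^ 2 := by
      gcongr
    _ ≤ ellipticK m * ((2 - m) * ellipticK m - ellipticE m) := by
      rw [← hsecond]
      exact sq_intervalIntegral_mul_le (by positivity) (Continuous.continuousOn (by fun_prop))
        (continuous_inv_ellipticDelta hm₁).continuousOn fun θ _ => (inv_pos.2 (hΔ θ)).le

theorem growthRatio_pos (hm : m ∈ Ioo 0 1) : 0 < growthRatio m := by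
  have := hm.1
  have := sub_pos.2 hm.2
  have := ellipticK_pos hm.2
  unfold growthRatio
  positivity

theorem hasDerivAt_growthRatio (hm : m ∈ Ioo 0 1) :
    HasDerivAt growthRatio (growthRatio m *
      ((π ^ 2 / 4 - ellipticK m * ((2 - m) * ellipticK m - ellipticE m)) /
        (m * (1 - m) * ellipticK m ^ 2))) m := by
  have hm₀ := hm.1.ne'
  have hm₁ : 1 - m ≠ 0 := by linarith [hm.2]
  have hK := ellipticK_pos hm.2
  have hodds : HasDerivAt (fun m : ℝ => (1 - m) / m) (-(1 / m ^ 2)) m :=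
    (((hasDerivAt_id m).const_sub 1).div (hasDerivAt_id m) hm₀).congr_deriv (by
      simp only [id]; field_simp; ring)
  refine ((hodds.mul (((hasDerivAt_ellipticK hm₀ hm.2).const_mul (2 / π)).pow 2)).mul
    ((hasDerivAt_grotzschMod hm).const_mul 2).neg.exp).congr_deriv ?_
  simp only [growthRatio, Pi.mul_apply, Pi.pow_apply, Pi.neg_apply, Nat.add_one_sub_one, pow_one,
    Nat.cast_ofNat]
  field_simp
  ring

theorem strictAntiOn_growthRatio : StrictAntiOn growthRatio (Ioo 0 1) := by
  refine strictAntiOn_of_deriv_neg (convex_Ioo 0 1)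
    (fun m hm => (hasDerivAt_growthRatio hm).continuousAt.continuousWithinAt) fun m hm => ?_
  rw [interior_Ioo] at hm
  have := hm.1
  have := sub_pos.2 hm.2
  have := ellipticK_pos hm.2
  rw [(hasDerivAt_growthRatio hm).deriv]
  exact mul_neg_of_pos_of_neg (growthRatio_pos hm) (div_neg_of_neg_of_pos
    (sub_neg.2 (pi_sq_div_four_lt hm.1.ne' hm.2)) (by positivity))

/-! ### Logarithmic singularity of `ellipticK` -/

theorem integral_cos_div_one_add_sin :
    ∫ θ in (0 : ℝ)..(π / 2), cos θ / (1 + sin θ) = log 2 := by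
  have hpos : ∀ θ ∈ uIcc 0 (π / 2), 0 < 1 + sin θ := fun θ hθ => by
    rw [uIcc_of_le (by positivity)] at hθ
    linarith [sin_nonneg_of_nonneg_of_le_pi hθ.1 (by linarith [hθ.2, pi_pos])]
  rw [intervalIntegral.integral_eq_sub_of_hasDerivAt
    (fun θ hθ => ((hasDerivAt_sin θ).const_add 1).log (hpos θ hθ).ne')
    (ContinuousOn.intervalIntegrable (.div (by fun_prop) (by fun_prop)
      fun θ hθ => (hpos θ hθ).ne'))]
  norm_num

theorem integral_mul_sin_div_ellipticDelta {k : ℝ} (hk : k ∈ Ioo (-1) 1) :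
    ∫ θ in (0 : ℝ)..(π / 2), k * sin θ / ellipticDelta (k ^ 2) θ = artanh k := by
  have hk_sq : k ^ 2 < 1 := (sq_lt_one_iff_abs_lt_one k).2 (abs_lt.2 hk)
  have hΔ := ellipticDelta_pos hk_sq
  have hpos (θ : ℝ) : 0 < k * cos θ + ellipticDelta (k ^ 2) θ := by
    have : |k * cos θ| < ellipticDelta (k ^ 2) θ := by
      refine abs_lt_of_sq_lt_sq ?_ (hΔ θ).le
      rw [sq_ellipticDelta hk_sq, sin_sq]
      linarith
    linarith [neg_abs_le (k * cos θ)]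
  have hderiv (θ : ℝ) : HasDerivAt (fun θ => -log (k * cos θ + ellipticDelta (k ^ 2) θ))
      (k * sin θ / ellipticDelta (k ^ 2) θ) θ := by
    refine ((((hasDerivAt_cos θ).const_mul k).add
      (hasDerivAt_ellipticDelta hk_sq θ)).log (hpos θ).ne').neg.congr_deriv ?_
    have := hpos θ
    have := hΔ θ
    simp only [Pi.add_apply]
    field_simp
    ring
  rw [intervalIntegral.integral_eq_sub_of_hasDerivAt (fun θ _ => hderiv θ)
    (Continuous.intervalIntegrable (.div (by fun_prop) (by fun_prop) fun θ => (hΔ θ).ne') _ _)]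
  have h₁ : 0 < 1 + k := by linarith [hk.1]
  have h₂ : 0 < 1 - k := by linarith [hk.2]
  have hfactor : 1 - k ^ 2 = (1 + k) * (1 - k) := by ring
  simp only [ellipticDelta, cos_pi_div_two, sin_pi_div_two, cos_zero, sin_zero, mul_zero, mul_one,
    zero_add, one_pow, ne_eq, OfNat.ofNat_ne_zero, not_false_eq_true, zero_pow, sub_zero, sqrt_one]
  rw [hfactor, log_sqrt (by positivity), log_mul h₁.ne' h₂.ne', artanh_eq_half_log
    (Ioo_subset_Icc_self hk), log_div h₁.ne' h₂.ne', add_comm k 1]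
  ring

theorem cos_mul_ellipticDelta_le {k θ : ℝ} (hk₀ : 0 ≤ k) (hk₁ : k < 1) (hθ : 0 ≤ sin θ) :
    cos θ * ellipticDelta (k ^ 2) θ ≤ (1 - k * sin θ) * (1 + sin θ) := by
  have hsin := sin_le_one θ
  have hk_sin : k * sin θ ≤ sin θ := mul_le_of_le_one_left hθ hk₁.le
  have hk_sin' : 0 ≤ k * sin θ := mul_nonneg hk₀ hθ
  refine le_of_sq_le_sq ?_ (mul_nonneg (by linarith) (by linarith))
  calc (cos θ * ellipticDelta (k ^ 2) θ) ^ 2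
    _ = (1 - sin θ) * (1 + k * sin θ) * ((1 + sin θ) * (1 - k * sin θ)) := by
      rw [mul_pow, sq_ellipticDelta ((sq_lt_one_iff₀ hk₀).2 hk₁), cos_sq']
      ring
    _ ≤ (1 - k * sin θ) * (1 + sin θ) * ((1 + sin θ) * (1 - k * sin θ)) :=
      mul_le_mul_of_nonneg_right (by nlinarith only [hsin, hk_sin, hk_sin'])
        (mul_nonneg (by linarith) (by linarith))
    _ = ((1 - k * sin θ) * (1 + sin θ)) ^ 2 := by ring

-- `(1 - k sin θ) / Δ(θ)` dominates its value `cos θ / (1 + sin θ)` at `k = 1`.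
theorem log_two_add_artanh_le_ellipticK {k : ℝ} (hk₀ : 0 ≤ k) (hk₁ : k < 1) :
    log 2 + artanh k ≤ ellipticK (k ^ 2) := by
  have hΔ := ellipticDelta_pos ((sq_lt_one_iff₀ hk₀).2 hk₁)
  have hsin : ∀ θ ∈ Icc 0 (π / 2), 0 ≤ sin θ := fun θ hθ =>
    sin_nonneg_of_nonneg_of_le_pi hθ.1 (by linarith [hθ.2, pi_pos])
  have hint₁ : IntervalIntegrable (fun θ => cos θ / (1 + sin θ)) volume 0 (π / 2) :=
    ContinuousOn.intervalIntegrable_of_Icc (by positivity) (.div (by fun_prop) (by fun_prop)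
      fun θ hθ => by linarith [hsin θ hθ])
  have hint₂ : IntervalIntegrable (fun θ => k * sin θ / ellipticDelta (k ^ 2) θ) volume 0 (π / 2) :=
    Continuous.intervalIntegrable (.div (by fun_prop) (by fun_prop) fun θ => (hΔ θ).ne') _ _
  rw [← integral_cos_div_one_add_sin,
    ← integral_mul_sin_div_ellipticDelta ⟨by linarith, hk₁⟩,
    ← intervalIntegral.integral_add hint₁ hint₂]
  refine intervalIntegral.integral_mono_on (by positivity) (hint₁.add hint₂)
    (intervalIntegrable_inv_ellipticDelta ((sq_lt_one_iff₀ hk₀).2 hk₁) _ _) fun θ hθ => ?_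
  have := hsin θ hθ
  rw [← le_sub_iff_add_le, ← one_div, ← sub_div, div_le_div_iff₀ (by linarith) (hΔ θ)]
  exact cos_mul_ellipticDelta_le hk₀ hk₁ this

theorem log_le_ellipticK_one_sub (hm : m ∈ Ioo 0 1) :
    log (2 * (1 + √(1 - m))) - log m / 2 ≤ ellipticK (1 - m) := by
  have hk_sq : √(1 - m) ^ 2 = 1 - m := sq_sqrt (by linarith [hm.2])
  have hk₁ : √(1 - m) < 1 := (sqrt_lt' one_pos).2 (by linarith [hm.1])
  have hk₀ := sqrt_nonneg (1 - m)
  have h := log_two_add_artanh_le_ellipticK hk₀ hk₁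
  generalize √(1 - m) = k at *
  have hm_eq : m = (1 - k) * (1 + k) := by linarith
  rw [hk_sq, artanh_eq_half_log ⟨by linarith, hk₁.le⟩,
    log_div (by linarith) (by linarith)] at h
  rw [log_mul two_ne_zero (by linarith)]
  have : log m = log (1 - k) + log (1 + k) := by
    rw [hm_eq, log_mul (by linarith) (by linarith)]
  linarith

theorem sqrt_one_sub_mul_ellipticK_one_sub_le_grotzschMod (hm : m ∈ Ioo 0 1) :
    √(1 - m) * ellipticK (1 - m) ≤ grotzschMod m := by
  have := ellipticK_pos (sub_lt_self 1 hm.1)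
  rw [grotzschMod, le_div_iff₀ (ellipticK_pos hm.2), mul_right_comm]
  gcongr
  exact sqrt_one_sub_mul_ellipticK_le hm.1.le hm.2

theorem tendsto_ellipticK_one_sub_atTop :
    Tendsto (fun m => ellipticK (1 - m)) (𝓝[>] 0) atTop := by
  have hlog : Tendsto (fun m => -(log m / 2)) (𝓝[>] 0) atTop :=
    tendsto_neg_atBot_atTop.comp (tendsto_log_nhdsGT_zero.atBot_div_const two_pos)
  refine tendsto_atTop_mono' _ ?_ hlog
  filter_upwards [Ioo_mem_nhdsGT one_pos] with m hm
  linarith [log_le_ellipticK_one_sub hm,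
    log_nonneg (x := 2 * (1 + √(1 - m))) (by linarith [sqrt_nonneg (1 - m)])]

theorem tendsto_grotzschMod_atTop : Tendsto grotzschMod (𝓝[>] 0) atTop :=
  (tendsto_ellipticK_one_sub_atTop.const_mul_atTop (by positivity)).atTop_mul_pos
    (inv_pos.2 (by positivity)) (tendsto_ellipticK_nhdsGT_zero.inv₀ (by positivity))

theorem grotzschMod_pos (hm : m ∈ Ioo 0 1) : 0 < grotzschMod m :=
  div_pos (mul_pos (by positivity) (ellipticK_pos (sub_lt_self 1 hm.1))) (ellipticK_pos hm.2)

theorem exists_grotzschMod_eq {m₀ y : ℝ} (hm₀ : m₀ ∈ Ioo 0 1) (hy : grotzschMod m₀ < y) :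
    ∃ m ∈ Ioo 0 m₀, grotzschMod m = y := by
  have hcont : ContinuousOn grotzschMod (Ioc 0 m₀) := fun m hm =>
    (hasDerivAt_grotzschMod ⟨hm.1, hm.2.trans_lt hm₀.2⟩).continuousAt.continuousWithinAt
  obtain ⟨m, hm, rfl⟩ := isPreconnected_Ioc.intermediate_value_Ici (right_mem_Ioc.2 hm₀.1)
    (le_principal_iff.2 (Ioc_mem_nhdsGT hm₀.1)) hcont tendsto_grotzschMod_atTop hy.le
  exact ⟨m, ⟨hm.1, hm.2.lt_of_ne fun h => hy.ne (h ▸ rfl)⟩, rfl⟩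

/-! ### Bounds for the growth of `m⁻¹` -/

theorem growthRatio_le_exp (hm : m ∈ Ioo 0 1) :
    growthRatio m ≤ exp (-(m * log m) / (1 + √(1 - m))
      - 2 * √(1 - m) * log (2 * (1 + √(1 - m)))) := by
  have hm₀ := hm.1
  have hk_sq : √(1 - m) ^ 2 = 1 - m := sq_sqrt (sub_nonneg.2 hm.2.le)
  have hmod : √(1 - m) * (log (2 * (1 + √(1 - m))) - log m / 2) ≤ grotzschMod m :=
    (mul_le_mul_of_nonneg_left (log_le_ellipticK_one_sub hm) (sqrt_nonneg _)).trans
      (sqrt_one_sub_mul_ellipticK_one_sub_le_grotzschMod hm)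
  have hconj : m / (1 + √(1 - m)) = 1 - √(1 - m) := by
    rw [div_eq_iff (by positivity)]
    linarith
  calc growthRatio m
    _ = (1 - m) * (2 / π * ellipticK m) ^ 2 * (exp (-log m) * exp (-(2 * grotzschMod m))) := by
      rw [growthRatio, exp_neg (log m), exp_log hm₀]
      ring
    _ ≤ exp (-log m) * exp (-(2 * grotzschMod m)) :=
      mul_le_of_le_one_left (by positivity) (one_sub_mul_sq_ellipticK_le_one hm₀.le hm.2)
    _ ≤ exp (-(m * log m) / (1 + √(1 - m)) - 2 * √(1 - m) * log (2 * (1 + √(1 - m)))) := by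
      rw [← exp_add, exp_le_exp, neg_div, mul_div_right_comm, hconj]
      linarith

theorem growthRatio_lt (hm : m ∈ Ioo 0 1) : growthRatio m < 1 / 16 := by
  have hbound : Tendsto (fun m : ℝ => exp (-(m * log m) / (1 + √(1 - m))
      - 2 * √(1 - m) * log (2 * (1 + √(1 - m))))) (𝓝[>] 0) (𝓝 (1 / 16)) := by
    have hcont : ContinuousAt (fun m : ℝ => exp (-(m * log m) / (1 + √(1 - m))
        - 2 * √(1 - m) * log (2 * (1 + √(1 - m))))) 0 := by
      have := continuous_mul_log
      fun_prop (disch := norm_num)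
    have hval : exp (-(2 * log 4)) = 1 / 16 := by
      rw [exp_neg, two_mul, exp_add, exp_log four_pos]
      norm_num
    convert hcont.tendsto.mono_left nhdsWithin_le_nhds using 2
    norm_num [hval]
  have hm_half : m / 2 ∈ Ioo 0 1 := ⟨half_pos hm.1, by linarith [hm.1, hm.2]⟩
  refine (strictAntiOn_growthRatio hm_half hm (half_lt_self hm.1)).trans_le
    (ge_of_tendsto hbound ?_)
  filter_upwards [Ioo_mem_nhdsGT hm_half.1] with x hx
  have hx' : x ∈ Ioo 0 1 := ⟨hx.1, hx.2.trans hm_half.2⟩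
  exact (strictAntiOn_growthRatio hx' hm_half hx.2).le.trans (growthRatio_le_exp hx')

theorem hasDerivAt_exp_two_mul_grotzschMod (hm : m ∈ Ioo 0 1) :
    HasDerivAt (fun m => exp (2 * grotzschMod m)) (-(m ^ 2 * growthRatio m)⁻¹) m := by
  have hm₀ := hm.1
  have hm₁ := sub_pos.2 hm.2
  have hK := ellipticK_pos hm.2
  refine ((hasDerivAt_grotzschMod hm).const_mul 2).exp.congr_deriv ?_
  rw [growthRatio, exp_neg]
  field_simp
  norm_num

theorem exists_inv_sub_inv_eq_growthRatio_mul {m₀ : ℝ} (hm : 0 < m) (hmm₀ : m < m₀)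
    (hm₀ : m₀ < 1) : ∃ x ∈ Ioo m m₀, m⁻¹ - m₀⁻¹ =
      growthRatio x * (exp (2 * grotzschMod m) - exp (2 * grotzschMod m₀)) := by
  have hmem : ∀ x ∈ Icc m m₀, x ∈ Ioo 0 1 := fun x hx =>
    ⟨hm.trans_le hx.1, hx.2.trans_lt hm₀⟩
  have hinv : ∀ x ∈ Icc m m₀, HasDerivAt (fun x : ℝ => x⁻¹) (-(x ^ 2)⁻¹) x := fun x hx =>
    hasDerivAt_inv (hmem x hx).1.ne'
  have hexp : ∀ x ∈ Icc m m₀, HasDerivAt (fun x => exp (2 * grotzschMod x))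
      (-(x ^ 2 * growthRatio x)⁻¹) x := fun x hx => hasDerivAt_exp_two_mul_grotzschMod (hmem x hx)
  obtain ⟨x, hx, hslope⟩ := exists_ratio_hasDerivAt_eq_ratio_slope _ _ hmm₀
    (fun x hx => (hinv x hx).continuousAt.continuousWithinAt)
    (fun x hx => hinv x (Ioo_subset_Icc_self hx)) _ _
    (fun x hx => (hexp x hx).continuousAt.continuousWithinAt)
    (fun x hx => hexp x (Ioo_subset_Icc_self hx))
  have hx' := hmem x (Ioo_subset_Icc_self hx)
  have := hx'.1
  have := growthRatio_pos hx'
  refine ⟨x, hx, ?_⟩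
  generalize m⁻¹ = a, m₀⁻¹ = b at *
  field_simp at hslope
  linarith

theorem inv_sub_inv_mem_Ioo {m₀ : ℝ} (hm : 0 < m) (hmm₀ : m < m₀) (hm₀ : m₀ < 1) :
    m⁻¹ - m₀⁻¹ ∈ Ioo (growthRatio m₀ * (exp (2 * grotzschMod m) - exp (2 * grotzschMod m₀)))
      (1 / 16 * (exp (2 * grotzschMod m) - exp (2 * grotzschMod m₀))) := by
  obtain ⟨x, hx, heq⟩ := exists_inv_sub_inv_eq_growthRatio_mul hm hmm₀ hm₀
  have hx' : x ∈ Ioo 0 1 := ⟨hm.trans hx.1, hx.2.trans hm₀⟩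
  have hpos : 0 < exp (2 * grotzschMod m) - exp (2 * grotzschMod m₀) :=
    pos_of_mul_pos_right (heq ▸ sub_pos.2 (inv_strictAnti₀ hm hmm₀)) (growthRatio_pos hx').le
  rw [heq]
  exact ⟨mul_lt_mul_of_pos_right
    (strictAntiOn_growthRatio hx' ⟨hm.trans hmm₀, hm₀⟩ hx.2) hpos,
    mul_lt_mul_of_pos_right (growthRatio_lt hx') hpos⟩

theorem growthRatio_mul_exp_two_mul_grotzschMod (m : ℝ) :
    growthRatio m * exp (2 * grotzschMod m) = (1 - m) / m * (2 / π * ellipticK m) ^ 2 := by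
  rw [growthRatio, mul_assoc, ← exp_add, neg_add_cancel, exp_zero, mul_one]

theorem inv_sub_inv_mem_Ioo_of_grotzschMod_eq_mul {m₀ K : ℝ} (hm : 0 < m) (hmm₀ : m < m₀)
    (hm₀ : m₀ < 1) (hmod : grotzschMod m = K * grotzschMod m₀) :
    m⁻¹ - m₀⁻¹ ∈ Ioo
      ((1 - m₀) / m₀ * (2 / π * ellipticK m₀) ^ 2 * (exp (2 * (K - 1) * grotzschMod m₀) - 1))
      (1 / 16 * exp (2 * grotzschMod m₀) * (exp (2 * (K - 1) * grotzschMod m₀) - 1)) := by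
  have hexp : exp (2 * grotzschMod m) - exp (2 * grotzschMod m₀)
      = exp (2 * grotzschMod m₀) * (exp (2 * (K - 1) * grotzschMod m₀) - 1) := by
    rw [hmod, mul_sub, ← exp_add]
    ring_nf
  have h := inv_sub_inv_mem_Ioo hm hmm₀ hm₀
  rwa [hexp, ← mul_assoc, ← mul_assoc, growthRatio_mul_exp_two_mul_grotzschMod] at h

theorem ellK_sqrt (hm : m ∈ Icc 0 1) : ellK √m = ellipticK m := by
  refine intervalIntegral.integral_congr fun θ _ => ?_
  have : 0 ≤ 1 - m * sin θ ^ 2 := by nlinarith [sin_sq_le_one θ, hm.1, hm.2]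
  simp only [sq_sqrt hm.1]
  rw [rpow_neg this, ← sqrt_eq_rpow, ellipticDelta]

theorem mu_sqrt (hm : m ∈ Icc 0 1) : mu √m = grotzschMod m := by
  rw [mu, sq_sqrt hm.1, ellK_sqrt hm, ellK_sqrt ⟨sub_nonneg.2 hm.2, by linarith [hm.1]⟩,
    grotzschMod]

end EllipticIntegrals

theorem stmt_12 (eta : ℝ → ℝ → ℝ)
    (heta : ∀ K t : ℝ, 0 < K → 0 < t → ∀ u ∈ Set.Ioo (0:ℝ) 1,
      mu u = K * mu (1 / Real.sqrt (1 + t)) → eta K t = 1 / u ^ 2 - 1) :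
    ∀ t K : ℝ, 0 < t → 1 < K →
      t + t * (2 / Real.pi * ellK (1 / Real.sqrt (1 + t))) ^ 2 *
        (Real.exp (2 * (K - 1) * mu (1 / Real.sqrt (1 + t))) - 1) < eta K t ∧
      eta K t < t + 1 / 16 * Real.exp (2 * mu (1 / Real.sqrt (1 + t))) *
        (Real.exp (2 * (K - 1) * mu (1 / Real.sqrt (1 + t))) - 1) := by
  intro t K ht hK
  have hm₀ : (1 + t)⁻¹ ∈ Ioo 0 1 := ⟨by positivity, inv_lt_one_of_one_lt₀ (by linarith)⟩
  obtain ⟨m, hm, hmod⟩ := exists_grotzschMod_eq hm₀ (lt_mul_of_one_lt_left (grotzschMod_pos hm₀) hK)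
  have hm₁ : m < 1 := hm.2.trans hm₀.2
  have hsqrt : 1 / √(1 + t) = √(1 + t)⁻¹ := by rw [Real.sqrt_inv, one_div]
  have hmu₀ : mu √(1 + t)⁻¹ = grotzschMod (1 + t)⁻¹ := mu_sqrt (Ioo_subset_Icc_self hm₀)
  have heta_eq : eta K t = m⁻¹ - 1 := by
    rw [heta K t (by linarith) ht √m
      ⟨Real.sqrt_pos.2 hm.1, (Real.sqrt_lt' one_pos).2 (by rwa [one_pow])⟩
      (by rw [hsqrt, hmu₀, mu_sqrt ⟨hm.1.le, hm₁.le⟩, hmod]), Real.sq_sqrt hm.1.le, one_div]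
  have hodds : (1 - (1 + t)⁻¹) / (1 + t)⁻¹ = t := by field_simp; ring
  have hbounds := inv_sub_inv_mem_Ioo_of_grotzschMod_eq_mul hm.1 hm.2 hm₀.2 hmod
  rw [hodds, inv_inv] at hbounds
  rw [hsqrt, hmu₀, ellK_sqrt (Ioo_subset_Icc_self hm₀), heta_eq]
  exact ⟨by linarith [hbounds.1], by linarith [hbounds.2]⟩
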